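/- arXiv:1601.04283 — 2 statements merged into one kernel-verified Lean document; each statement's English description precedes it below -/
import Mathlib

section
/- Let $G$ be a set (e.g. the underlying set of a discrete group), let $T : G \to \mathbb{C}$ be a bounded function, and let $(f_n)_{n\in\mathbb{N}}$ and $(g_m)_{m\in\mathbb{N}}$ be sequences in the closed unit ball of $\ell^1(G;\mathbb{C})$. For $n,m \in \mathbb{N}$ set $S(n,m) = \sum_{x\in G} T(x) f_n(x) g_m(x)$ (an absolutely convergent sum). Suppose there exist complex numbers $a_n$ (for each $n$), $a$, $b_m$ (for each $m$), and $b$ such that $\lim_{m\to\infty} S(n,m) = a_n$ for every $n$, $\lim_{n\to\infty} a_n = a$, $\lim_{n\to\infty} S(n,m) = b_m$ for every $m$, and $\lim_{m\to\infty} b_m = b$. Then $a = b$. (This is the iterated-limit criterion expressing that $\ell^1(G)$ with pointwise multiplication is Arens regular.) -/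
/-!
Along a nonprincipal ultrafilter on `ℕ`, the sequences `f` and `g` converge pointwise to functions
`F` and `H`, which again lie in the unit ball of `ℓ¹(G)` (bound finite partial sums). Since unit
ball elements are pointwise bounded by `1`, dominated convergence shows that pairing with a fixed
summable function passes to such pointwise limits. Applied to `T * g m` and then to `T * F`, this
gives `b = ∑ T F H`; by symmetry `a = ∑ T F H` as well.
-/


open Filter Topology

theorem norm_le_one_of_tsum {G : Type*} {u : G → ℂ} (hu : Summable fun x => ‖u x‖)
    (hu1 : (∑' x, ‖u x‖) ≤ 1) (x : G) : ‖u x‖ ≤ 1 :=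
  (hu.le_tsum x fun _ _ => norm_nonneg _).trans hu1

/-- Pointwise sequential compactness of the unit ball of `ℓ¹(G)` along an ultrafilter; the limit
is again summable, by passing to the limit in finite partial sums. -/
theorem exists_pointwise_limit {G : Type*} (U : Ultrafilter ℕ) (u : ℕ → G → ℂ)
    (hu : ∀ n, Summable fun x => ‖u n x‖) (hu1 : ∀ n, (∑' x, ‖u n x‖) ≤ 1) :
    ∃ F : G → ℂ, (∀ x, Tendsto (fun n => u n x) U (𝓝 (F x))) ∧ Summable fun x => ‖F x‖ := by
  have key : ∀ x, ∃ y : ℂ, Tendsto (fun n => u n x) U (𝓝 y) := by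
    intro x
    obtain ⟨y, -, hy⟩ := (isCompact_closedBall (0 : ℂ) 1).ultrafilter_le_nhds
      (U.map fun n => u n x) (by
        rw [le_principal_iff]
        exact Filter.mem_map.2 (univ_mem' fun n => by
          simpa using norm_le_one_of_tsum (hu n) (hu1 n) x))
    exact ⟨y, hy⟩
  choose F hF using key
  refine ⟨F, hF, summable_of_sum_le (c := 1) (fun _ => norm_nonneg _) fun s => ?_⟩
  exact le_of_tendsto (tendsto_finsetSum s fun x _ => (hF x).norm)
    (Eventually.of_forall fun n =>
      ((hu n).sum_le_tsum s fun _ _ => norm_nonneg _).trans (hu1 n))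

/-- Pairing with a fixed summable `h` is continuous for pointwise convergence on the unit ball
of `ℓ¹(G)`, by dominated convergence with dominating function `‖h‖`. -/
theorem tendsto_pairing {G : Type*} (U : Ultrafilter ℕ) (u : ℕ → G → ℂ)
    (hu : ∀ n, Summable fun x => ‖u n x‖) (hu1 : ∀ n, (∑' x, ‖u n x‖) ≤ 1)
    {F : G → ℂ} (hF : ∀ x, Tendsto (fun n => u n x) U (𝓝 (F x)))
    {h : G → ℂ} (hh : Summable fun x => ‖h x‖) :
    Tendsto (fun n => ∑' x, h x * u n x) U (𝓝 (∑' x, h x * F x)) := by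
  refine tendsto_tsum_of_dominated_convergence hh (fun x => (hF x).const_mul (h x))
    (Eventually.of_forall fun n x => ?_)
  rw [norm_mul]
  exact mul_le_of_le_one_right (norm_nonneg _) (norm_le_one_of_tsum (hu n) (hu1 n) x)

theorem summable_bounded_mul {G : Type*} {T : G → ℂ} {C : ℝ} (hT : ∀ x, ‖T x‖ ≤ C)
    {u : G → ℂ} (hu : Summable fun x => ‖u x‖) : Summable fun x => ‖T x * u x‖ := by
  refine Summable.of_nonneg_of_le (fun _ => norm_nonneg _) (fun x => ?_) (hu.mul_left C)
  rw [norm_mul]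
  exact mul_le_mul_of_nonneg_right (hT x) (norm_nonneg _)

/-- One of the two iterated limits, expressed through the pointwise limits of both sequences. -/
theorem iterated_limit_eq {G : Type*} (U : Ultrafilter ℕ) (hU : (U : Filter ℕ) ≤ atTop)
    {T : G → ℂ} {C : ℝ} (hT : ∀ x, ‖T x‖ ≤ C) {f g : ℕ → G → ℂ}
    (hf : ∀ n, Summable fun x => ‖f n x‖)
    (hg : ∀ m, Summable fun x => ‖g m x‖) (hg1 : ∀ m, (∑' x, ‖g m x‖) ≤ 1)
    (hf1 : ∀ n, (∑' x, ‖f n x‖) ≤ 1) {F H : G → ℂ}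
    (hF : ∀ x, Tendsto (fun n => f n x) U (𝓝 (F x)))
    (hH : ∀ x, Tendsto (fun m => g m x) U (𝓝 (H x)))
    (hHs : Summable fun x => ‖H x‖) {an : ℕ → ℂ} {a : ℂ}
    (ha1 : ∀ n, Tendsto (fun m => ∑' x, T x * f n x * g m x) atTop (𝓝 (an n)))
    (ha2 : Tendsto an atTop (𝓝 a)) : a = ∑' x, T x * F x * H x := by
  have h1 : ∀ n, an n = ∑' x, T x * H x * f n x := fun n => by
    rw [tendsto_nhds_unique ((ha1 n).mono_left hU)
      (tendsto_pairing U g hg hg1 hH (summable_bounded_mul hT (hf n)))]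
    exact tsum_congr fun x => mul_right_comm _ _ _
  rw [funext h1] at ha2
  rw [tendsto_nhds_unique (ha2.mono_left hU)
    (tendsto_pairing U f hf hf1 hF (summable_bounded_mul hT hHs))]
  exact tsum_congr fun x => mul_right_comm _ _ _

/-- Iterated-limit criterion expressing that `ℓ¹(G)` with pointwise
multiplication is Arens regular: for a bounded `T : G → ℂ` and sequences
`(f n)`, `(g m)` in the closed unit ball of `ℓ¹(G; ℂ)`, the two iterated
limits of `S n m = ∑ x, T x * f n x * g m x` agree whenever both exist. -/
theorem stmt0 {G : Type*} (T : G → ℂ) (C : ℝ) (hT : ∀ x, ‖T x‖ ≤ C)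
    (f g : ℕ → G → ℂ)
    (hf : ∀ n, Summable fun x => ‖f n x‖) (hf1 : ∀ n, (∑' x, ‖f n x‖) ≤ 1)
    (hg : ∀ m, Summable fun x => ‖g m x‖) (hg1 : ∀ m, (∑' x, ‖g m x‖) ≤ 1)
    (S : ℕ → ℕ → ℂ) (hS : ∀ n m, S n m = ∑' x, T x * f n x * g m x)
    (an : ℕ → ℂ) (a : ℂ) (bm : ℕ → ℂ) (b : ℂ)
    (ha1 : ∀ n, Tendsto (fun m => S n m) atTop (𝓝 (an n)))
    (ha2 : Tendsto an atTop (𝓝 a))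
    (hb1 : ∀ m, Tendsto (fun n => S n m) atTop (𝓝 (bm m)))
    (hb2 : Tendsto bm atTop (𝓝 b)) :
    a = b := by
  have hU : (hyperfilter ℕ : Filter ℕ) ≤ atTop := Nat.hyperfilter_le_atTop
  obtain ⟨F, hF, hFs⟩ := exists_pointwise_limit (hyperfilter ℕ) f hf hf1
  obtain ⟨H, hH, hHs⟩ := exists_pointwise_limit (hyperfilter ℕ) g hg hg1
  simp only [hS] at ha1 hb1
  rw [iterated_limit_eq _ hU hT hf hg hg1 hf1 hF hH hHs ha1 ha2]
  simp only [mul_right_comm (T _) (f _ _)] at hb1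
  rw [iterated_limit_eq _ hU hT hg hf hf1 hg1 hH hF hFs hb1 hb2]
  exact tsum_congr fun x => mul_right_comm _ _ _
end

section
/- Let $G$ be a (discrete) group. The following are equivalent: (i) $G$ is finite; (ii) for every bounded function $T : G \to \mathbb{C}$ and all sequences $(f_n)_{n\in\mathbb{N}}$, $(g_m)_{m\in\mathbb{N}}$ in the closed unit ball of $\ell^1(G;\mathbb{C})$, whenever both iterated limits $\lim_{n}\lim_{m} \Phi(n,m)$ and $\lim_{m}\lim_{n} \Phi(n,m)$ of $\Phi(n,m) = \sum_{(x,y)\in G\times G} T(xy)\, f_n(x)\, g_m(y)$ exist (in the sense that all the inner limits exist and the outer limits exist), they are equal. (Condition (ii) is the iterated-limit criterion expressing that the convolution algebra $(\ell^1(G), *, \|\cdot\|_1)$ is Arens regular; thus $\ell^1(G)$ with convolution is Arens regular if and only if $G$ is finite.) -/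
/-!
If `G` is finite, a sequence in the unit ball of `ℓ¹(G)` has a pointwise convergent subsequence by
compactness, and the pairing is a finite sum, hence jointly continuous in `(f, g)`; both iterated
limits are therefore the value of the pairing at the two subsequential limits.

If `G` is infinite, then there are sequences `x`, `y` in `G` for which no product `x n * y m` with
`n < m` equals a product `x k * y l` with `l ≤ k` (`exists_separated_products`). Taking point masses
at the `x n` and `y m`, and for `T` the indicator of the products `x n * y m` with `n < m`, the
pairing is `1` for `n < m` and `0` otherwise, so that the iterated limits are `1` and `0`.
The sequences `x` and `y` are the even and odd terms of a sequence none of whose terms is a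
word `a⁻¹ * b * c` or `a * b * c⁻¹` in earlier terms.
-/

open Filter Topology


/-- An infinite group contains a sequence each term of which avoids the finitely many words
`a⁻¹ * b * c` and `a * b * c⁻¹` in the earlier terms. -/
lemma exists_generic_seq (G : Type*) [Group G] [Infinite G] :
    ∃ w : ℕ → G, ∀ n i j k, i < n → j < n → k < n →
      w n ≠ (w i)⁻¹ * w j * w k ∧ w n ≠ w i * w j * (w k)⁻¹ := by
  classical
  have key : ∀ s : Finset G, ∃ z : G, ∀ a ∈ s, ∀ b ∈ s, ∀ c ∈ s,
      z ≠ a⁻¹ * b * c ∧ z ≠ a * b * c⁻¹ := by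
    intro s
    obtain ⟨z, hz⟩ := Infinite.exists_notMem_finset
      ((s ×ˢ s ×ˢ s).image (fun p => p.1⁻¹ * p.2.1 * p.2.2) ∪
        (s ×ˢ s ×ˢ s).image (fun p => p.1 * p.2.1 * p.2.2⁻¹))
    refine ⟨z, fun a ha b hb c hc => ⟨fun h => hz ?_, fun h => hz ?_⟩⟩
    · exact Finset.mem_union_left _ (Finset.mem_image.2 ⟨(a, b, c), by simp [ha, hb, hc], h.symm⟩)
    · exact Finset.mem_union_right _ (Finset.mem_image.2 ⟨(a, b, c), by simp [ha, hb, hc], h.symm⟩)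
  choose F hF using key
  -- `S n` is the set of the first `n` terms.
  let S : ℕ → Finset G := fun n => Nat.rec ∅ (fun _ s => insert (F s) s) n
  have hS : ∀ n, S (n + 1) = insert (F (S n)) (S n) := fun n => rfl
  have hmono : Monotone S := monotone_nat_of_le_succ fun n => by
    rw [hS]; exact Finset.subset_insert _ _
  have hmem : ∀ i n, i < n → F (S i) ∈ S n := fun i n h =>
    hmono (Nat.succ_le_of_lt h) (by rw [Nat.succ_eq_add_one, hS]; exact Finset.mem_insert_self _ _)
  exact ⟨fun n => F (S n), fun n i j k hi hj hk =>
    hF (S n) _ (hmem i n hi) _ (hmem j n hj) _ (hmem k n hk)⟩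

lemma exists_separated_products (G : Type*) [Group G] [Infinite G] :
    ∃ x y : ℕ → G, ∀ n m k l, n < m → l ≤ k → x n * y m ≠ x k * y l := by
  obtain ⟨w, hw⟩ := exists_generic_seq G
  refine ⟨fun n => w (2 * n), fun n => w (2 * n + 1), fun n m k l hnm hlk h => ?_⟩
  dsimp only at h
  -- Unless `l = m`, the term of largest index in `h` occurs once; solve for it.
  rcases eq_or_ne l m with rfl | hlm
  · have h' := mul_right_cancel h
    refine (hw (2 * k) (2 * n) (2 * n) (2 * n) (by omega) (by omega) (by omega)).2 ?_
    rw [← h']; group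
  · by_cases h1 : m < k ∧ l < k
    · refine (hw (2 * k) (2 * n) (2 * m + 1) (2 * l + 1) (by omega) (by omega) (by omega)).2 ?_
      rw [h]; group
    · by_cases h2 : k ≤ m
      · refine (hw (2 * m + 1) (2 * n) (2 * k) (2 * l + 1) (by omega) (by omega) (by omega)).1 ?_
        rw [mul_assoc, ← h]; group
      · refine (hw (2 * l + 1) (2 * k) (2 * n) (2 * m + 1) (by omega) (by omega) (by omega)).1 ?_
        rw [mul_assoc, h]; group

lemma tsum_norm_single {G : Type*} [DecidableEq G] (x : G) :
    HasSum (fun z => ‖(Pi.single x 1 : G → ℂ) z‖) 1 := by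
  have h := hasSum_single (f := fun z => ‖(Pi.single x 1 : G → ℂ) z‖) x
    (fun z hz => by simp [hz])
  simpa using h

lemma pairing_single {G : Type*} [Group G] [DecidableEq G] (T : G → ℂ) (x y : G) :
    ∑' p : G × G, T (p.1 * p.2) * (Pi.single x 1 : G → ℂ) p.1 * (Pi.single y 1 : G → ℂ) p.2
      = T (x * y) := by
  rw [tsum_eq_single (x, y)]
  · simp
  · rintro ⟨u, v⟩ huv
    by_cases hu : u = x
    · have hv : v ≠ y := fun hv => huv (by rw [hu, hv])
      simp [hv]
    · simp [hu]

/-- On a finite group a sequence in the unit ball of `ℓ¹` has a pointwise convergent subsequence. -/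
lemma exists_subseq_tendsto {G : Type*} [Finite G] (f : ℕ → G → ℂ)
    (hs : ∀ n, Summable fun x => ‖f n x‖) (hf : ∀ n, (∑' x, ‖f n x‖) ≤ 1) :
    ∃ (F : G → ℂ) (φ : ℕ → ℕ), StrictMono φ ∧ Tendsto (f ∘ φ) atTop (𝓝 F) := by
  have hK : IsCompact (Set.univ.pi fun _ : G => Metric.closedBall (0 : ℂ) 1) :=
    isCompact_univ_pi fun _ => isCompact_closedBall _ _
  obtain ⟨F, -, φ, hφ, hF⟩ := hK.tendsto_subseq (x := f) fun n x _ => by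
    rw [mem_closedBall_zero_iff]
    exact ((hs n).le_tsum x fun _ _ => norm_nonneg _).trans (hf n)
  exact ⟨F, φ, hφ, hF⟩

/-- A discrete group `G` is finite iff the iterated-limit criterion holds for
the convolution algebra `(ℓ¹(G), *, ‖·‖₁)`: for every bounded `T : G → ℂ` and
all sequences `(f n)`, `(g m)` in the closed unit ball of `ℓ¹(G; ℂ)`, whenever
both iterated limits of `Φ n m = ∑ (x,y), T (x*y) * f n x * g m y` exist, they
are equal.  (I.e. `ℓ¹(G)` with convolution is Arens regular iff `G` is finite.) -/
theorem stmt2 {G : Type*} [Group G] :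
    Finite G ↔
      ∀ (T : G → ℂ) (C : ℝ), (∀ x, ‖T x‖ ≤ C) →
      ∀ (f g : ℕ → G → ℂ),
        (∀ n, Summable fun x => ‖f n x‖) → (∀ n, (∑' x, ‖f n x‖) ≤ 1) →
        (∀ m, Summable fun x => ‖g m x‖) → (∀ m, (∑' x, ‖g m x‖) ≤ 1) →
      ∀ (an : ℕ → ℂ) (a : ℂ) (bm : ℕ → ℂ) (b : ℂ),
        (∀ n, Tendsto (fun m => ∑' p : G × G, T (p.1 * p.2) * f n p.1 * g m p.2)
          atTop (𝓝 (an n))) →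
        Tendsto an atTop (𝓝 a) →
        (∀ m, Tendsto (fun n => ∑' p : G × G, T (p.1 * p.2) * f n p.1 * g m p.2)
          atTop (𝓝 (bm m))) →
        Tendsto bm atTop (𝓝 b) →
        a = b := by
  classical
  constructor
  · intro hG T C _ f g hfs hf hgs hg an a bm b han ha hbm hb
    have := Fintype.ofFinite G
    obtain ⟨F, φ, hφ, hF⟩ := exists_subseq_tendsto f hfs hf
    obtain ⟨H, ψ, hψ, hH⟩ := exists_subseq_tendsto g hgs hg
    rw [tendsto_pi_nhds] at hF hH
    simp only [tsum_fintype] at han hbm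
    have han' : ∀ n, an n = ∑ p : G × G, T (p.1 * p.2) * f n p.1 * H p.2 := fun n =>
      tendsto_nhds_unique ((han n).comp hψ.tendsto_atTop)
        (tendsto_finsetSum _ fun p _ => (hH p.2).const_mul _)
    have hbm' : ∀ m, bm m = ∑ p : G × G, T (p.1 * p.2) * F p.1 * g m p.2 := fun m =>
      tendsto_nhds_unique ((hbm m).comp hφ.tendsto_atTop)
        (tendsto_finsetSum _ fun p _ => ((hF p.1).const_mul _).mul_const _)
    have ha' : a = ∑ p : G × G, T (p.1 * p.2) * F p.1 * H p.2 := by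
      refine tendsto_nhds_unique (ha.comp hφ.tendsto_atTop) ?_
      rw [funext han']
      exact tendsto_finsetSum _ fun p _ => ((hF p.1).const_mul _).mul_const _
    have hb' : b = ∑ p : G × G, T (p.1 * p.2) * F p.1 * H p.2 := by
      refine tendsto_nhds_unique (hb.comp hψ.tendsto_atTop) ?_
      rw [funext hbm']
      exact tendsto_finsetSum _ fun p _ => (hH p.2).const_mul _
    rw [ha', hb']
  · intro h
    by_contra hG
    rw [not_finite_iff_infinite] at hG
    obtain ⟨x, y, hxy⟩ := exists_separated_products G
    let T : G → ℂ := fun z => if ∃ n m, n < m ∧ x n * y m = z then 1 else 0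
    have hT1 : ∀ n m, n < m → T (x n * y m) = 1 := fun n m hnm =>
      if_pos ⟨n, m, hnm, rfl⟩
    have hT0 : ∀ n m, m ≤ n → T (x n * y m) = 0 := fun n m hmn =>
      if_neg fun ⟨n', m', hlt, he⟩ => hxy n' m' n m hlt hmn he
    have hT : ∀ z, ‖T z‖ ≤ 1 := fun z => by
      dsimp only [T]; split_ifs <;> simp
    refine one_ne_zero (α := ℂ) (h T 1 hT (fun n => Pi.single (x n) 1) (fun m => Pi.single (y m) 1)
      (fun n => (tsum_norm_single _).summable) (fun n => (tsum_norm_single _).tsum_eq.le)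
      (fun n => (tsum_norm_single _).summable) (fun n => (tsum_norm_single _).tsum_eq.le)
      (fun _ => 1) 1 (fun _ => 0) 0 (fun n => ?_) tendsto_const_nhds (fun m => ?_)
      tendsto_const_nhds)
    · simp only [pairing_single]
      refine tendsto_const_nhds.congr' ?_
      filter_upwards [eventually_gt_atTop n] with m hm using (hT1 n m hm).symm
    · simp only [pairing_single]
      refine tendsto_const_nhds.congr' ?_
      filter_upwards [eventually_ge_atTop m] with n hn using (hT0 n m hn).symm
end
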